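/- arXiv:2111.03373 — 3 statements merged into one kernel-verified Lean document; each statement's English description precedes it below -/
import Mathlib

section
/- Let V and E be finite types forming a connected multigraph: maps ini : E → V and an involution bar : E → E with bar (bar e) = e and bar e ≠ e for every e, terminal vertex ter e := ini (bar e), such that V is nonempty and any two vertices are joined by an edge-chain. Then there exists a closed edge-chain e₁, …, e_N (i.e. ter e_k = ini e_{k+1} for all k < N and ter e_N = ini e₁) such that for every edge e ∈ E there is an index k with e_k = e or e_k = bar e. Equivalently, there is a standard circuit C_N and a surjective morphism of graphs C_N → Γ. -/
/-- `l` is an edge-chain from `u` to `v`. -/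
def EdgeWalk {V E : Type} (ini : E → V) (bar : E → E) : V → List E → V → Prop
  | u, [], v => u = v
  | u, e :: l, v => ini e = u ∧ EdgeWalk ini bar (ini (bar e)) l v

theorem EdgeWalk.append {V E : Type} {ini : E → V} {bar : E → E} {v w : V} {m : List E} :
    ∀ {l : List E} {u : V}, EdgeWalk ini bar u l v → EdgeWalk ini bar v m w →
      EdgeWalk ini bar u (l ++ m) w
  | [], u, h, h' => by
      have h : u = v := h
      subst h; exact h'
  | _ :: _, _, h, h' => ⟨h.1, EdgeWalk.append h.2 h'⟩

theorem EdgeWalk.head {V E : Type} {ini : E → V} {bar : E → E} {u v : V} {l : List E}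
    (h : EdgeWalk ini bar u l v) (hl : 0 < l.length) : ini l[0] = u := by
  cases l with
  | nil => simp at hl
  | cons e l => exact h.1

theorem EdgeWalk.step {V E : Type} {ini : E → V} {bar : E → E} {v : V} :
    ∀ {l : List E} {u : V}, EdgeWalk ini bar u l v → ∀ (i : ℕ) (hi : i + 1 < l.length),
      ini (bar l[i]) = ini l[i + 1]
  | [], _, _, i, hi => by simp at hi
  | _ :: l, _, h, 0, hi => (EdgeWalk.head h.2 (by simpa using hi)).symm
  | _ :: l, _, h, i + 1, hi => EdgeWalk.step h.2 i (by simpa using hi)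

theorem EdgeWalk.last {V E : Type} {ini : E → V} {bar : E → E} {v : V} :
    ∀ {l : List E} {u : V}, EdgeWalk ini bar u l v → ∀ (i : ℕ) (hi : i + 1 = l.length),
      ini (bar l[i]) = v
  | [], _, _, i, hi => by simp at hi
  | [_], _, h, 0, _ => h.2
  | _ :: _ :: _, _, _, 0, hi => by simp at hi
  | _ :: l, _, h, i + 1, hi => EdgeWalk.last h.2 i (by simpa using hi)

/-- Every finite connected (Serre) multigraph receives a surjective morphism from a
standard circuit: there is a closed edge-chain `e₁, …, e_N` (the chain and closedness
conditions are encoded cyclically via `finRotate N`) passing through every edge of the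
graph, up to orientation. -/
theorem exists_surjective_closed_edge_chain
    (V E : Type) [Finite V] [Finite E] [Nonempty V]
    (ini : E → V) (bar : E → E)
    (hinv : ∀ e, bar (bar e) = e) (hne : ∀ e, bar e ≠ e)
    (hconn : ∀ u v : V,
      Relation.ReflTransGen (fun a b => ∃ e, ini e = a ∧ ini (bar e) = b) u v) :
    ∃ (N : ℕ) (c : Fin N → E),
      (∀ k : Fin N, ini (bar (c k)) = ini (c (finRotate N k))) ∧
      ∀ e : E, ∃ k : Fin N, c k = e ∨ c k = bar e := by
  classical
  have hw : ∀ u v : V, ∃ l, EdgeWalk ini bar u l v := by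
    intro u v
    induction hconn u v with
    | refl => exact ⟨[], rfl⟩
    | tail _ h ih =>
      obtain ⟨e, h1, h2⟩ := h
      obtain ⟨l, hl⟩ := ih
      exact ⟨l ++ [e], hl.append ⟨h1, h2⟩⟩
  obtain ⟨v⟩ := ‹Nonempty V›
  have key : ∀ s : List E, ∃ l, EdgeWalk ini bar v l v ∧ ∀ e ∈ s, e ∈ l := by
    intro s
    induction s with
    | nil => exact ⟨[], rfl, by simp⟩
    | cons e s ih =>
      obtain ⟨l, hl, hs⟩ := ih
      obtain ⟨a, ha⟩ := hw v (ini e)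
      obtain ⟨b, hb⟩ := hw (ini (bar e)) v
      refine ⟨a ++ e :: b ++ l, EdgeWalk.append (EdgeWalk.append ha ⟨rfl, hb⟩) hl, ?_⟩
      intro x hx
      rcases List.mem_cons.1 hx with rfl | hx
      · simp
      · simp [hs x hx]
  obtain ⟨_⟩ := nonempty_fintype E
  obtain ⟨l, hl, hs⟩ := key (Finset.univ : Finset E).toList
  refine ⟨l.length, fun k => l[k.1], ?_, ?_⟩
  · rintro ⟨i, hi⟩
    have hr : ((finRotate l.length ⟨i, hi⟩ : Fin l.length) : ℕ) =
        if i + 1 = l.length then 0 else i + 1 := by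
      generalize l.length = N at hi
      cases N with
      | zero => omega
      | succ n =>
        rw [coe_finRotate]
        simp [Fin.ext_iff]
    by_cases h : i + 1 = l.length
    · simp only [hr, h, if_true]
      rw [hl.last i h, hl.head]
    · simp only [hr, h, if_false]
      exact hl.step i (by omega)
  · intro e
    obtain ⟨i, hi, h⟩ := List.getElem_of_mem (hs e (by simp))
    exact ⟨⟨i, hi⟩, Or.inl h⟩
end

section
/- Let Y be a topological space, ι an index type, T : ι → Set Y a family of subsets, V : ι → Type a family of types, and for each i a function φ i defined on T i with values in V i. For (i, x) in the sigma type Σ i, V i, write F(i,x) := {y ∈ Y | y ∈ T i ∧ φ i y = x}. Assume that F(i,x) is a preconnected subset of Y for every i and x. Define a relation R on Σ i, V i by: R (i,x₁) (j,x₂) holds iff there exists y ∈ T i ∩ T j with φ i y = x₁ and φ j y = x₂. Then for every p : Σ i, V i, the union of the sets F(q) over all q with EqvGen R p q is a preconnected subset of Y. -/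
/-- Pseudofibres are connected: if each fibre `F (i, x) = {y | y ∈ T i ∧ φ i y = x}` is
preconnected, then for any `p` the union of the fibres `F q` over all `q` equivalent to `p`
under the equivalence relation generated by
`R (i, x₁) (j, x₂) ↔ ∃ y ∈ T i ∩ T j, φ i y = x₁ ∧ φ j y = x₂` is preconnected. -/
theorem isPreconnected_pseudofibre
    {Y : Type*} [TopologicalSpace Y] {ι : Type*}
    (T : ι → Set Y) (V : ι → Type*) (φ : ∀ i, Y → V i)
    (hF : ∀ (i : ι) (x : V i), IsPreconnected {y : Y | y ∈ T i ∧ φ i y = x})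
    (p : Σ i, V i) :
    IsPreconnected
      (⋃ q ∈ {q : Σ i, V i |
          Relation.EqvGen (fun a b : Σ i, V i =>
            ∃ y : Y, (y ∈ T a.1 ∧ y ∈ T b.1) ∧ φ a.1 y = a.2 ∧ φ b.1 y = b.2) p q},
        {y : Y | y ∈ T q.1 ∧ φ q.1 y = q.2}) := by
  refine IsPreconnected.biUnion_of_reflTransGen (fun q _ => hF q.1 q.2) ?_
  intro i hi j hj
  have hij := Relation.EqvGen.trans _ _ _ (Relation.EqvGen.symm _ _ hi) hj
  clear hj
  suffices h : ∀ a b : Σ i, V i, Relation.EqvGen (fun a b : Σ i, V i =>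
      ∃ y : Y, (y ∈ T a.1 ∧ y ∈ T b.1) ∧ φ a.1 y = a.2 ∧ φ b.1 y = b.2) a b →
      Relation.EqvGen (fun a b : Σ i, V i =>
      ∃ y : Y, (y ∈ T a.1 ∧ y ∈ T b.1) ∧ φ a.1 y = a.2 ∧ φ b.1 y = b.2) p a →
      Relation.ReflTransGen (fun i j : Σ i, V i =>
        ({y : Y | y ∈ T i.1 ∧ φ i.1 y = i.2} ∩ {y : Y | y ∈ T j.1 ∧ φ j.1 y = j.2}).Nonempty ∧
        i ∈ {q : Σ i, V i | Relation.EqvGen (fun a b : Σ i, V i =>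
            ∃ y : Y, (y ∈ T a.1 ∧ y ∈ T b.1) ∧ φ a.1 y = a.2 ∧ φ b.1 y = b.2) p q}) a b ∧
      Relation.ReflTransGen (fun i j : Σ i, V i =>
        ({y : Y | y ∈ T i.1 ∧ φ i.1 y = i.2} ∩ {y : Y | y ∈ T j.1 ∧ φ j.1 y = j.2}).Nonempty ∧
        i ∈ {q : Σ i, V i | Relation.EqvGen (fun a b : Σ i, V i =>
            ∃ y : Y, (y ∈ T a.1 ∧ y ∈ T b.1) ∧ φ a.1 y = a.2 ∧ φ b.1 y = b.2) p q}) b a from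
    (h i j hij hi).1
  intro a b hab
  induction hab with
  | rel a b h =>
    intro ha
    have hb := Relation.EqvGen.trans _ _ _ ha (Relation.EqvGen.rel _ _ h)
    obtain ⟨y, ⟨h1, h2⟩, h3, h4⟩ := h
    exact ⟨.single ⟨⟨y, ⟨h1, h3⟩, ⟨h2, h4⟩⟩, ha⟩, .single ⟨⟨y, ⟨h2, h4⟩, ⟨h1, h3⟩⟩, hb⟩⟩
  | refl a => exact fun _ => ⟨.refl, .refl⟩
  | symm a b h ih =>
    intro hb
    exact (ih (Relation.EqvGen.trans _ _ _ hb (Relation.EqvGen.symm _ _ h))).symm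
  | trans a b c h1 h2 ih1 ih2 =>
    intro ha
    have hb := Relation.EqvGen.trans _ _ _ ha h1
    exact ⟨(ih1 ha).1.trans (ih2 hb).1, (ih2 hb).2.trans (ih1 ha).2⟩
end

section
/- Let V and E form a connected multigraph (maps ini : E → V, involution bar : E → E with bar (bar e) = e and bar e ≠ e, terminal vertex ter e := ini (bar e), any two vertices joined by an edge-chain), let c : E → ℂˣ be a transition datum, i.e. c (bar e) = (c e)⁻¹ for every e, and let v₀ be a fixed vertex. Then the following are equivalent: (i) the set of holonomies c e₁ ⋯ c e_n over all closed edge-chains with ini e₁ = v₀ (together with 1, the holonomy of the empty chain at v₀) is a finite subset of ℂˣ; (ii) there exist an integer m > 0 and a function s : V → ℂˣ such that s (ter e) = (c e)^m * s (ini e) for every edge e. -/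
/-- `Hol ini bar c u v h`: some edge-chain from `u` to `v` has holonomy `h`. -/
inductive Hol {V E : Type*} (ini : E → V) (bar : E → E) (c : E → ℂˣ) : V → V → ℂˣ → Prop
  | nil (u : V) : Hol ini bar c u u 1
  | cons (e : E) (v : V) (h : ℂˣ) : Hol ini bar c (ini (bar e)) v h →
      Hol ini bar c (ini e) v (c e * h)

theorem Hol.trans' {V E : Type*} {ini : E → V} {bar : E → E} {c : E → ℂˣ} {u v w : V}
    {g h : ℂˣ} (H : Hol ini bar c u v g) (K : Hol ini bar c v w h) :
    Hol ini bar c u w (g * h) := by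
  induction H with
  | nil u => simpa using K
  | cons e v h' _ ih =>
    rw [mul_assoc]
    exact Hol.cons e _ _ (ih K)

theorem Hol.edge {V E : Type*} {ini : E → V} {bar : E → E} {c : E → ℂˣ} (e : E) :
    Hol ini bar c (ini e) (ini (bar e)) (c e) := by
  simpa using Hol.cons e _ _ (Hol.nil (ini := ini) (bar := bar) (c := c) (ini (bar e)))

theorem Hol.inv' {V E : Type*} {ini : E → V} {bar : E → E} {c : E → ℂˣ}
    (hinv : ∀ e, bar (bar e) = e) (hc : ∀ e, c (bar e) = (c e)⁻¹) {u v : V}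
    {g : ℂˣ} (H : Hol ini bar c u v g) : Hol ini bar c v u g⁻¹ := by
  induction H with
  | nil u => simpa using Hol.nil u
  | cons e v h _ ih =>
    have h2 := Hol.edge (ini := ini) (bar := bar) (c := c) (bar e)
    rw [hinv, hc] at h2
    rw [mul_inv_rev]
    exact ih.trans' h2

theorem Hol.chain {V E : Type*} {ini : E → V} {bar : E → E} {c : E → ℂˣ} {u v : V}
    {g : ℂˣ} (H : Hol ini bar c u v g) :
    (u = v ∧ g = 1) ∨ ∃ (N : ℕ) (ch : Fin (N + 1) → E),
      (∀ k : Fin N, ini (bar (ch k.castSucc)) = ini (ch k.succ)) ∧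
      ini (ch 0) = u ∧ ini (bar (ch (Fin.last N))) = v ∧ ∏ k, c (ch k) = g := by
  induction H with
  | nil u => exact Or.inl ⟨rfl, rfl⟩
  | cons e v h _ ih =>
    right
    rcases ih with ⟨h1, h2⟩ | ⟨N, ch, h1, h2, h3, h4⟩
    · exact ⟨0, fun _ => e, fun k => k.elim0, rfl, h1, by simp [h2]⟩
    · refine ⟨N + 1, Fin.cons e ch, ?_, rfl, ?_, ?_⟩
      · intro k
        refine Fin.cases ?_ (fun j => ?_) k
        · simpa using h2.symm
        · rw [← Fin.succ_castSucc, Fin.cons_succ, Fin.cons_succ]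
          exact h1 j
      · rw [← Fin.succ_last, Fin.cons_succ]
        exact h3
      · rw [Fin.prod_univ_succ]
        simp [h4]

/-- On a connected (Serre) multigraph with a transition datum `c : E → ℂˣ`
(`c (bar e) = (c e)⁻¹`) and a base vertex `v₀`, the set of holonomies of closed
edge-chains based at `v₀` (together with `1`, the holonomy of the empty chain) is
finite if and only if there exist `m > 0` and a potential `s : V → ℂˣ` with
`s (ter e) = (c e) ^ m * s (ini e)` for every edge. Closed edge-chains based at `v₀`
are encoded cyclically via `finRotate (N + 1)` with `ini (ch 0) = v₀`. -/
theorem holonomy_finite_iff_exists_pow_potential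
    (V E : Type*) (ini : E → V) (bar : E → E)
    (hinv : ∀ e, bar (bar e) = e) (hne : ∀ e, bar e ≠ e)
    (hconn : ∀ u v : V,
      Relation.ReflTransGen (fun a b => ∃ e, ini e = a ∧ ini (bar e) = b) u v)
    (c : E → ℂˣ) (hc : ∀ e, c (bar e) = (c e)⁻¹) (v₀ : V) :
    (Set.Finite (insert (1 : ℂˣ)
      {h : ℂˣ | ∃ (N : ℕ) (ch : Fin (N + 1) → E),
        (∀ k : Fin (N + 1), ini (bar (ch k)) = ini (ch (finRotate (N + 1) k))) ∧
        ini (ch 0) = v₀ ∧ ∏ k : Fin (N + 1), c (ch k) = h})) ↔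
    ∃ (m : ℕ), 0 < m ∧
      ∃ s : V → ℂˣ, ∀ e : E, s (ini (bar e)) = (c e) ^ m * s (ini e) := by
  constructor
  · intro hfin
    let G : Subgroup ℂˣ :=
      { carrier := {h | Hol ini bar c v₀ v₀ h}
        one_mem' := Hol.nil v₀
        mul_mem' := fun a b => a.trans' b
        inv_mem' := fun a => a.inv' hinv hc }
    have hG : (G : Set ℂˣ).Finite := by
      refine hfin.subset ?_
      intro h hh
      rcases Hol.chain (show Hol ini bar c v₀ v₀ h from hh) with ⟨-, h2⟩ | ⟨N, ch, h1, h2, h3, h4⟩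
      · exact Or.inl h2
      · refine Or.inr ⟨N, ch, fun k => ?_, h2, h4⟩
        refine Fin.lastCases ?_ (fun j => ?_) k
        · rw [finRotate_last, h2, h3]
        · rw [h1 j, finRotate_apply, Fin.coeSucc_eq_succ]
    have : Finite G := hG
    have hex : ∀ v, ∃ h, Hol ini bar c v₀ v h := by
      intro v
      induction hconn v₀ v with
      | refl => exact ⟨1, Hol.nil v₀⟩
      | tail _ hb ih =>
        obtain ⟨g, hg⟩ := ih
        obtain ⟨e, rfl, rfl⟩ := hb
        exact ⟨_, hg.trans' (Hol.edge e)⟩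
    choose t ht using hex
    refine ⟨Nat.card G, Nat.card_pos, fun v => t v ^ Nat.card G, fun e => ?_⟩
    have hm : t (ini e) * c e * (t (ini (bar e)))⁻¹ ∈ G :=
      ((ht (ini e)).trans' (Hol.edge e)).trans' ((ht _).inv' hinv hc)
    have h1 := congrArg Subtype.val (pow_card_eq_one' (x := (⟨_, hm⟩ : G)))
    simp only [SubmonoidClass.mk_pow, OneMemClass.coe_one] at h1
    rw [mul_pow, inv_pow, mul_inv_eq_one, mul_pow] at h1
    exact h1.symm.trans (mul_comm _ _)
  · rintro ⟨m, hm, s, hs⟩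
    have : NeZero m := ⟨hm.ne'⟩
    have hf : ((rootsOfUnity m ℂ : Subgroup ℂˣ) : Set ℂˣ).Finite :=
      (inferInstance : Finite (rootsOfUnity m ℂ))
    refine hf.subset ?_
    rintro h (rfl | ⟨N, ch, h1, -, rfl⟩)
    · exact one_mem _
    · rw [SetLike.mem_coe, mem_rootsOfUnity, ← Finset.prod_pow]
      have h2 : ∏ k, s (ini (bar (ch k))) = ∏ k, s (ini (ch k)) := by
        rw [← Equiv.prod_comp (finRotate (N + 1)) (fun k => s (ini (ch k)))]
        exact Finset.prod_congr rfl fun k _ => by rw [h1]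
      simp only [hs, Finset.prod_mul_distrib] at h2
      exact mul_eq_right.mp h2
end
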